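/- Suppose G is recurrent. Then for every vertex v with q_0(v) > 0, one has Σ_u deg(u) · q_last(u, v) = ∞, where the sum is over all vertices u of G. -/

import Mathlib

open MeasureTheory
open scoped ENNReal Classical

namespace CollisionsStmt

variable {V : Type*}

/-- One-step transition probabilities of the simple random walk on `G`:
`p(u,v) = 1/deg u` if `v` is adjacent to `u`, and `0` otherwise. -/
noncomputable def step (G : SimpleGraph V) [G.LocallyFinite] (u v : V) : ℝ≥0∞ :=
  if G.Adj u v then ((G.degree u : ℝ≥0∞))⁻¹ else 0

/-- The `n`-step transition probabilities of the simple random walk on `G`. -/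
noncomputable def pn (G : SimpleGraph V) [G.LocallyFinite] : ℕ → V → V → ℝ≥0∞
  | 0, u, v => if u = v then 1 else 0
  | n + 1, u, v => ∑' w, step G u w * pn G n w v

/-- `μ` is the law (on path space, via the Ionescu–Tulcea trajectory construction) of
two independent walks with one-step transition probabilities `p`, started at `a` and `b`
respectively; equivalently, the Markov chain on `V × V` with kernel `p ⊗ p` started at `(a, b)`.
The law is characterized by being a probability measure with the prescribed
finite-dimensional (cylinder) distributions. -/
def IsPairWalkMeasure [MeasurableSpace V] (p : V → V → ℝ≥0∞) (a b : V)
    (μ : Measure (ℕ → V × V)) : Prop :=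
  IsProbabilityMeasure μ ∧
    ∀ (n : ℕ) (x : ℕ → V × V),
      μ {ω | ∀ i ≤ n, ω i = x i} =
        (if x 0 = (a, b) then (1 : ℝ≥0∞) else 0) *
          ∏ i ∈ Finset.range n, (p (x i).1 (x (i + 1)).1 * p (x i).2 (x (i + 1)).2)

/-- The event that the two walks do not collide at any time `n ≥ 1`. -/
def noCollision : Set (ℕ → V × V) := {ω | ∀ n ≥ 1, (ω n).1 ≠ (ω n).2}

/-- The event that the two walks have their last collision at the vertex `v`: for some
`n ≥ 0`, `X_n = Y_n = v` and `X_m ≠ Y_m` for all `m > n`. -/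
def lastCollisionAt (v : V) : Set (ℕ → V × V) :=
  {ω | ∃ n : ℕ, ω n = (v, v) ∧ ∀ m > n, (ω m).1 ≠ (ω m).2}

/-- The event that the two walks collide at only finitely many times. -/
def finCollisions : Set (ℕ → V × V) := {ω | {n : ℕ | (ω n).1 = (ω n).2}.Finite}

/-- The event that the two walks collide at infinitely many times. -/
def infCollisions : Set (ℕ → V × V) := {ω | {n : ℕ | (ω n).1 = (ω n).2}.Infinite}

/-- The event that the two walks never collide (including at time `0`). -/
def neverCollide : Set (ℕ → V × V) := {ω | ∀ n : ℕ, (ω n).1 ≠ (ω n).2}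

section PathSpace

variable {S : Type*}

/-- The cylinder of paths that agree with `x` up to time `n`. -/
def pathCylinder (n : ℕ) (x : ℕ → S) : Set (ℕ → S) := {ω | ∀ i ≤ n, ω i = x i}

/-- The family of all path cylinders. -/
def pathCylinders (S : Type*) : Set (Set (ℕ → S)) := {A | ∃ n x, A = pathCylinder n x}

lemma isPiSystem_pathCylinders : IsPiSystem (pathCylinders S) := by
  rintro _ ⟨n, x, rfl⟩ _ ⟨m, y, rfl⟩ ⟨ω, hω, hω'⟩
  refine ⟨max n m, ω, ?_⟩
  ext η
  simp only [pathCylinder, Set.mem_inter_iff, Set.mem_ofPred_eq] at *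
  constructor
  · rintro ⟨h, h'⟩ i hi
    rcases le_max_iff.1 hi with hi | hi
    · rw [h i hi, hω i hi]
    · rw [h' i hi, hω' i hi]
  · intro h
    exact ⟨fun i hi => by rw [h i (le_max_of_le_left hi), hω i hi],
      fun i hi => by rw [h i (le_max_of_le_right hi), hω' i hi]⟩

/-- Extension of a finite path to an infinite one which is eventually constant. -/
def extendPath {n : ℕ} (s : Fin (n + 1) → S) (i : ℕ) : S :=
  s ⟨min i n, Nat.lt_succ_of_le (min_le_right i n)⟩

lemma preimage_prefix_singleton {n : ℕ} (s : Fin (n + 1) → S) :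
    (fun (ω : ℕ → S) (i : Fin (n + 1)) => ω i) ⁻¹' {s} = pathCylinder n (extendPath s) := by
  ext ω
  simp only [Set.mem_preimage, Set.mem_singleton_iff, pathCylinder, Set.mem_ofPred_eq, extendPath,
    funext_iff]
  constructor
  · intro h i hi
    simp [← h, hi]
  · intro h i
    have hi : (i : ℕ) ≤ n := Nat.le_of_lt_succ i.2
    rw [h i hi]
    congr 1
    ext
    simp [hi]

variable [MeasurableSpace S]

lemma measurable_shift (n : ℕ) : Measurable fun (ω : ℕ → S) (i : ℕ) => ω (n + i) :=
  measurable_pi_lambda _ fun _ => measurable_pi_apply _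

variable [Countable S] [DiscreteMeasurableSpace S]

lemma measurableSet_eval_eq (n : ℕ) (w : S) : MeasurableSet {ω : ℕ → S | ω n = w} :=
  measurableSet_eq_fun (measurable_pi_apply n) measurable_const

lemma measurableSet_pathCylinder (n : ℕ) (x : ℕ → S) : MeasurableSet (pathCylinder n x) := by
  have : pathCylinder n x = ⋂ i, ⋂ (_ : i ≤ n), (fun ω : ℕ → S => ω i) ⁻¹' {x i} := by
    ext; simp [pathCylinder]
  rw [this]
  exact .iInter fun i => .iInter fun _ => measurable_pi_apply i (measurableSet_singleton _)

lemma generateFrom_pathCylinders :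
    (MeasurableSpace.pi : MeasurableSpace (ℕ → S)) =
      MeasurableSpace.generateFrom (pathCylinders S) := by
  apply le_antisymm
  · refine iSup_le fun k => ?_
    rw [← measurable_iff_comap_le]
    refine @measurable_to_countable' S (ℕ → S) _ _ (MeasurableSpace.generateFrom _) _ fun z => ?_
    have : (fun ω : ℕ → S => ω k) ⁻¹' {z} =
        ⋃ s : {s : Fin (k + 1) → S // s (Fin.last k) = z}, pathCylinder k (extendPath s.1) := by
      ext ω
      simp only [← preimage_prefix_singleton, Set.mem_preimage, Set.mem_singleton_iff,
        Set.mem_iUnion]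
      constructor
      · intro h
        exact ⟨⟨_, h⟩, rfl⟩
      · rintro ⟨⟨s, hs⟩, rfl⟩
        exact hs
    rw [this]
    exact MeasurableSet.iUnion fun s => MeasurableSpace.measurableSet_generateFrom ⟨_, _, rfl⟩
  · apply MeasurableSpace.generateFrom_le
    rintro _ ⟨n, x, rfl⟩
    exact measurableSet_pathCylinder n x

/-- If the event `B` has conditional probability `c` given any history up to time `n` that ends
at `w`, then it has conditional probability `c` given that the path is at `w` at time `n`. -/
lemma measure_inter_eq_mul_of_pathCylinder (μ : Measure (ℕ → S)) (n : ℕ) (w : S)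
    (B : Set (ℕ → S)) (c : ℝ≥0∞)
    (h : ∀ x : ℕ → S, x n = w → μ (pathCylinder n x ∩ B) = μ (pathCylinder n x) * c) :
    μ ({ω | ω n = w} ∩ B) = μ {ω | ω n = w} * c := by
  let π : (ℕ → S) → Fin (n + 1) → S := fun ω i => ω i
  have hπ : Measurable π := measurable_pi_lambda _ fun i => measurable_pi_apply _
  let T : Set (Fin (n + 1) → S) := {s | s (Fin.last n) = w}
  have key (ν : Measure (ℕ → S)) :
      ν {ω | ω n = w} = ∑' s : T, ν (pathCylinder n (extendPath s.1)) := by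
    have := tsum_measure_preimage_singleton (μ := ν) (f := π) T.to_countable
      fun y _ => hπ (measurableSet_singleton y)
    simp only [π, preimage_prefix_singleton] at this
    rw [this]
    rfl
  rw [← Measure.restrict_apply (measurableSet_eval_eq n w), key, key, ← ENNReal.tsum_mul_right]
  refine tsum_congr fun s => ?_
  rw [Measure.restrict_apply (measurableSet_pathCylinder _ _), h]
  have hs : s.1 (Fin.last n) = w := s.2
  rw [← hs]
  simp only [extendPath, min_self]
  rfl

end PathSpace

section TransitionProbabilities

variable (G : SimpleGraph V) [G.LocallyFinite]

lemma pn_add (m n : ℕ) (u v : V) : pn G (m + n) u v = ∑' w, pn G m u w * pn G n w v := by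
  induction m generalizing u with
  | zero =>
    rw [tsum_eq_single u]
    · simp [pn]
    · intro w hw
      simp [pn, hw.symm]
  | succ m ih =>
    rw [Nat.add_right_comm]
    simp only [pn, ih, ← ENNReal.tsum_mul_left, ← ENNReal.tsum_mul_right]
    rw [ENNReal.tsum_comm]
    simp only [mul_assoc]

lemma pn_one (u v : V) : pn G 1 u v = step G u v := by
  simp only [pn]
  rw [tsum_eq_single v]
  · simp
  · intro w hw
    simp [hw]

lemma degree_mul_step (u v : V) :
    (G.degree u : ℝ≥0∞) * step G u v = if G.Adj u v then 1 else 0 := by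
  unfold step
  split_ifs with h
  · have : 0 < G.degree u := (G.degree_pos_iff_exists_adj u).2 ⟨v, h⟩
    exact ENNReal.mul_inv_cancel (by exact_mod_cast this.ne') (ENNReal.natCast_ne_top _)
  · simp

lemma degree_mul_step_comm (u v : V) :
    (G.degree u : ℝ≥0∞) * step G u v = G.degree v * step G v u := by
  simp only [degree_mul_step, G.adj_comm]

/-- The simple random walk is reversible with respect to the degree measure. -/
lemma degree_mul_pn_comm (n : ℕ) (u v : V) :
    (G.degree u : ℝ≥0∞) * pn G n u v = G.degree v * pn G n v u := by
  induction n generalizing u v with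
  | zero =>
    by_cases h : u = v
    · subst h; rfl
    · simp [pn, h, Ne.symm h]
  | succ n ih =>
    rw [pn_add G n 1 v u]
    simp only [pn_one]
    simp only [pn, ← ENNReal.tsum_mul_left]
    refine tsum_congr fun w => ?_
    rw [← mul_assoc, degree_mul_step_comm, mul_right_comm, ih, mul_right_comm, mul_assoc,
      mul_comm (step G w u)]

lemma degree_mul_pn_add (m n : ℕ) (v : V) :
    (G.degree v : ℝ≥0∞) * pn G (m + n) v v =
      ∑' u, (G.degree u : ℝ≥0∞) * (pn G m u v * pn G n u v) := by
  rw [pn_add, ← ENNReal.tsum_mul_left]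
  refine tsum_congr fun u => ?_
  rw [← mul_assoc, degree_mul_pn_comm, mul_assoc]

/-- Odd-time return probabilities are controlled by the neighbouring even-time ones. -/
lemma degree_mul_pn_odd_le (n : ℕ) (v : V) :
    (G.degree v : ℝ≥0∞) * pn G (n + (n + 1)) v v ≤
      G.degree v * pn G (n + n) v v + G.degree v * pn G ((n + 1) + (n + 1)) v v := by
  simp only [degree_mul_pn_add, ← ENNReal.tsum_add, ← mul_add]
  refine ENNReal.tsum_le_tsum fun u => mul_le_mul_right ?_ _
  rcases le_total (pn G n u v) (pn G (n + 1) u v) with h | h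
  · exact le_add_left (mul_le_mul_left h _)
  · exact le_add_right (mul_le_mul_right h _)

lemma tsum_even_return_eq_top (v : V) (hv : 0 < G.degree v) (hrec : ∑' n : ℕ, pn G n v v = ∞) :
    ∑' n : ℕ, (G.degree v : ℝ≥0∞) * pn G (n + n) v v = ∞ := by
  by_contra hfin
  have hodd : ∑' n : ℕ, (G.degree v : ℝ≥0∞) * pn G (n + (n + 1)) v v ≠ ∞ := by
    refine ne_top_of_le_ne_top ?_ (ENNReal.tsum_le_tsum fun n => degree_mul_pn_odd_le G n v)
    rw [ENNReal.tsum_add]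
    refine ENNReal.add_ne_top.2 ⟨hfin, ne_top_of_le_ne_top hfin ?_⟩
    exact ENNReal.tsum_comp_le_tsum_of_injective (add_left_injective 1)
      fun n => (G.degree v : ℝ≥0∞) * pn G (n + n) v v
  have hsplit := tsum_even_add_odd (f := fun n => (G.degree v : ℝ≥0∞) * pn G n v v)
    ENNReal.summable ENNReal.summable
  rw [ENNReal.tsum_mul_left (f := fun n => pn G n v v), hrec, ENNReal.mul_top (by exact_mod_cast hv.ne')] at hsplit
  simp only [two_mul, add_assoc] at hsplit
  exact ENNReal.add_ne_top.2 ⟨hfin, hodd⟩ hsplit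

end TransitionProbabilities

section PairWalk

variable [MeasurableSpace V]

/-- The finite-dimensional distributions, for a history extended by a second path. -/
lemma IsPairWalkMeasure.measure_inter_shift {p : V → V → ℝ≥0∞} {a b : V}
    {μ : Measure (ℕ → V × V)} (hμ : IsPairWalkMeasure p a b μ) (n m : ℕ) (x y : ℕ → V × V) :
    μ (pathCylinder n x ∩ (fun ω i => ω (n + i)) ⁻¹' pathCylinder m y) =
      μ (pathCylinder n x) * ((if y 0 = x n then 1 else 0) *
        ∏ i ∈ Finset.range m, (p (y i).1 (y (i + 1)).1 * p (y i).2 (y (i + 1)).2)) := by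
  by_cases hxy : y 0 = x n
  · let z : ℕ → V × V := fun i => if i ≤ n then x i else y (i - n)
    have hz₁ (i) (hi : i ≤ n) : z i = x i := by simp [z, hi]
    have hz₂ (i) : z (n + i) = y i := by
      rcases Nat.eq_zero_or_pos i with rfl | hi
      · simp [z, hxy]
      · simp [z, hi.ne']
    have hcyl : pathCylinder n x ∩ (fun ω i => ω (n + i)) ⁻¹' pathCylinder m y =
        pathCylinder (n + m) z := by
      ext ω
      simp only [pathCylinder, Set.mem_inter_iff, Set.mem_preimage, Set.mem_ofPred_eq]
      constructor
      · rintro ⟨h, h'⟩ i hi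
        rcases le_total i n with hin | hin
        · rw [h i hin, hz₁ i hin]
        · obtain ⟨j, rfl⟩ := Nat.exists_eq_add_of_le hin
          rw [h' j (by omega), hz₂]
      · intro h
        exact ⟨fun i hi => by rw [h i (by omega), hz₁ i hi],
          fun i hi => by rw [h _ (by omega), hz₂]⟩
    have h₁ := hμ.2 (n + m) z
    have h₂ := hμ.2 n x
    rw [hcyl]
    unfold pathCylinder
    rw [h₁, h₂, Finset.prod_range_add, hz₁ 0 (Nat.zero_le n), if_pos hxy, one_mul, mul_assoc]
    congr 2
    · refine Finset.prod_congr rfl fun i hi => ?_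
      have hi := Finset.mem_range.1 hi
      rw [hz₁ i (by omega), hz₁ (i + 1) (by omega)]
    · refine Finset.prod_congr rfl fun i _ => ?_
      rw [add_assoc, hz₂, hz₂]
  · rw [if_neg hxy, zero_mul, mul_zero]
    have : pathCylinder n x ∩ (fun ω i => ω (n + i)) ⁻¹' pathCylinder m y = ∅ := by
      rw [Set.eq_empty_iff_forall_notMem]
      rintro ω ⟨h, h'⟩
      exact hxy (by rw [← h n le_rfl, ← h' 0 (Nat.zero_le m)]; rfl)
    rw [this, measure_empty]

variable [Countable V] [DiscreteMeasurableSpace V]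

/-- The Markov property at time `n`. -/
lemma IsPairWalkMeasure.markov {p : V → V → ℝ≥0∞} {a b c d : V}
    {μ ν : Measure (ℕ → V × V)} (hμ : IsPairWalkMeasure p a b μ)
    (hν : IsPairWalkMeasure p c d ν) (n : ℕ) {B : Set (ℕ → V × V)} (hB : MeasurableSet B) :
    μ ({ω | ω n = (c, d)} ∩ (fun ω i => ω (n + i)) ⁻¹' B) = μ {ω | ω n = (c, d)} * ν B := by
  have := hμ.1
  have := hν.1
  refine measure_inter_eq_mul_of_pathCylinder μ n (c, d) _ _ fun x hx => ?_
  have happly {A : Set (ℕ → V × V)} (hA : MeasurableSet A) :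
      (μ.restrict (pathCylinder n x)).map (fun ω i => ω (n + i)) A =
        μ (pathCylinder n x ∩ (fun ω i => ω (n + i)) ⁻¹' A) := by
    rw [Measure.map_apply (measurable_shift n) hA, Measure.restrict_apply (measurable_shift n hA), Set.inter_comm]
  have heq : (μ.restrict (pathCylinder n x)).map (fun ω i => ω (n + i)) =
      μ (pathCylinder n x) • ν := by
    refine ext_of_generate_finite _ generateFrom_pathCylinders isPiSystem_pathCylinders ?_ ?_
    · rintro _ ⟨m, y, rfl⟩
      rw [happly (measurableSet_pathCylinder m y), hμ.measure_inter_shift, hx, Measure.smul_apply,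
        smul_eq_mul, ← hν.2 m y]
      rfl
    · simp [happly MeasurableSet.univ]
  rw [← happly hB, heq, Measure.smul_apply, smul_eq_mul]

lemma IsPairWalkMeasure.measure_succ {p : V → V → ℝ≥0∞} {a b : V}
    {μ : Measure (ℕ → V × V)} (hμ : IsPairWalkMeasure p a b μ) (n : ℕ) (w z : V × V) :
    μ ({ω | ω n = w} ∩ {ω | ω (n + 1) = z}) = μ {ω | ω n = w} * (p w.1 z.1 * p w.2 z.2) := by
  refine measure_inter_eq_mul_of_pathCylinder μ n w _ _ fun x hx => ?_
  let y : ℕ → V × V := fun i => if i = 0 then w else z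
  have h := hμ.measure_inter_shift n 1 x y
  have hset : pathCylinder n x ∩ (fun ω i => ω (n + i)) ⁻¹' pathCylinder 1 y =
      pathCylinder n x ∩ {ω | ω (n + 1) = z} := by
    ext ω
    simp only [pathCylinder, Set.mem_inter_iff, Set.mem_preimage, Set.mem_ofPred_eq,
      and_congr_right_iff]
    intro hω
    constructor
    · intro h'
      simpa [y] using h' 1 le_rfl
    · intro h' i hi
      interval_cases i
      · simpa [y, ← hx] using hω n le_rfl
      · simpa [y] using h'
  rw [hset] at h
  simpa [y, hx] using h

/-- At any fixed time, the two walks are independent with the `n`-step distributions. -/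
lemma IsPairWalkMeasure.measure_eq_pn {G : SimpleGraph V} [G.LocallyFinite] {a b : V}
    {μ : Measure (ℕ → V × V)} (hμ : IsPairWalkMeasure (step G) a b μ) (n : ℕ) (z : V × V) :
    μ {ω | ω n = z} = pn G n a z.1 * pn G n b z.2 := by
  induction n generalizing z with
  | zero =>
    have h := hμ.2 0 fun _ => z
    simp only [nonpos_iff_eq_zero, forall_eq, Finset.range_zero, Finset.prod_empty, mul_one] at h
    rw [h]
    obtain ⟨c, d⟩ := z
    simp only [pn, Prod.mk.injEq]
    rw [eq_comm (a := c), eq_comm (a := d)]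
    by_cases h₁ : a = c <;> by_cases h₂ : b = d <;> simp [h₁, h₂]
  | succ n ih =>
    have hsum := tsum_measure_preimage_singleton (μ := μ.restrict {ω | ω (n + 1) = z})
      (f := fun ω : ℕ → V × V => ω n) Set.univ.to_countable
      fun y _ => measurable_pi_apply n (measurableSet_singleton y)
    rw [Set.preimage_univ, Measure.restrict_apply_univ] at hsum
    rw [← hsum, tsum_univ fun w => (μ.restrict {ω | ω (n + 1) = z})
      ((fun ω : ℕ → V × V => ω n) ⁻¹' {w}), pn_add, pn_add, ENNReal.tsum_prod',
      ← ENNReal.tsum_mul_right]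
    refine tsum_congr fun c => ?_
    rw [← ENNReal.tsum_mul_left]
    refine tsum_congr fun d => ?_
    rw [Measure.restrict_apply (measurable_pi_apply n (measurableSet_singleton _)), pn_one, pn_one]
    refine (hμ.measure_succ n (c, d) z).trans ?_
    rw [ih, mul_mul_mul_comm]

lemma measurableSet_noCollision : MeasurableSet (noCollision (V := V)) := by
  have : noCollision (V := V) =
      ⋂ n, ⋂ (_ : n ≥ 1), (fun ω : ℕ → V × V => ω n) ⁻¹' {z | z.1 ≠ z.2} := by
    ext; simp [noCollision]
  rw [this]
  exact .iInter fun n => .iInter fun _ => measurable_pi_apply n (.of_discrete)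

/-- Decomposition of the last collision event according to the time of the last collision. -/
lemma IsPairWalkMeasure.measure_lastCollisionAt {G : SimpleGraph V} [G.LocallyFinite] {u v : V}
    {μ ν : Measure (ℕ → V × V)} (hμ : IsPairWalkMeasure (step G) u u μ)
    (hν : IsPairWalkMeasure (step G) v v ν) :
    μ (lastCollisionAt v) = ∑' n : ℕ, pn G n u v * pn G n u v * ν noCollision := by
  let D : ℕ → Set (ℕ → V × V) := fun n =>
    {ω | ω n = (v, v)} ∩ (fun ω i => ω (n + i)) ⁻¹' noCollision
  have hD : lastCollisionAt v = ⋃ n, D n := by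
    ext ω
    simp only [lastCollisionAt, noCollision, D, Set.mem_iUnion, Set.mem_inter_iff,
      Set.mem_preimage, Set.mem_ofPred_eq]
    refine exists_congr fun n => and_congr_right fun _ => ⟨fun h i hi => h _ (by omega), ?_⟩
    intro h m hm
    obtain ⟨j, rfl⟩ := Nat.exists_eq_add_of_lt hm
    exact h (j + 1) (by omega)
  have hmeas (n : ℕ) : MeasurableSet (D n) :=
    (measurableSet_eval_eq n (v, v)).inter (measurable_shift n measurableSet_noCollision)
  have hlt {i j : ℕ} (hij : i < j) : Disjoint (D i) (D j) := by
    rw [Set.disjoint_left]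
    rintro ω ⟨_, hi⟩ ⟨hj, _⟩
    obtain ⟨k, rfl⟩ := Nat.exists_eq_add_of_lt hij
    refine hi (k + 1) (by omega) ?_
    have hj : ω (i + (k + 1)) = (v, v) := hj
    simp [hj]
  have hdisj : Pairwise (Function.onFun Disjoint D) := by
    intro i j hij
    rcases hij.lt_or_gt with h | h
    · exact hlt h
    · exact (hlt h).symm
  rw [hD, measure_iUnion hdisj hmeas]
  refine tsum_congr fun n => ?_
  rw [hμ.markov hν n measurableSet_noCollision, hμ.measure_eq_pn]

end PairWalk

/-- if `G` is recurrent and `q_0(v) > 0`, then `Σ_u deg(u) · q_last(u, v) = ∞`. -/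
theorem recurrent_mass_diverges
    [Countable V] [MeasurableSpace V] [DiscreteMeasurableSpace V]
    (G : SimpleGraph V) [G.LocallyFinite]
    (hconn : G.Connected) (hdeg : ∀ v : V, 0 < G.degree v)
    (hrec : ∀ w : V, ∑' n : ℕ, pn G n w w = ∞)
    (μ : V → Measure (ℕ → V × V))
    (hμ : ∀ w : V, IsPairWalkMeasure (step G) w w (μ w))
    (v : V) (hq : 0 < μ v noCollision) :
    ∑' u : V, (G.degree u : ℝ≥0∞) * μ u (lastCollisionAt v) = ∞ := by
  have hsum : ∑' u : V, (G.degree u : ℝ≥0∞) * μ u (lastCollisionAt v) =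
      (∑' n : ℕ, (G.degree v : ℝ≥0∞) * pn G (n + n) v v) * μ v noCollision := by
    simp only [fun u => (hμ u).measure_lastCollisionAt (hμ v), degree_mul_pn_add,
      ← ENNReal.tsum_mul_left, ← ENNReal.tsum_mul_right]
    rw [ENNReal.tsum_comm]
    simp only [mul_assoc]
  rw [hsum, tsum_even_return_eq_top G v (hdeg v) (hrec v), ENNReal.top_mul hq.ne']
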